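/- Let β > 0 and let m ≥ 1 be an integer. There exists K > 0 depending only on m and β such that for all integers n ≥ 2, the expected total number of triangles of G^n_{m,β} satisfies |E[Σ_{1≤a<b<c≤n} m(a,b)·m(a,c)·m(b,c)] − (m(m−1)(1+β)²/β² + m(m−1)²(1+β)³/(β²(2+β))) · log n| ≤ K. -/

import Mathlib

open Finset

/-- A parent sequence of length `N`: for each `t ∈ {2,…,N}` an index `f t ∈ {1,…,t-1}`. -/
def ParentSeq (N : ℕ) : Type :=
  ∀ t : Set.Icc 2 N, Set.Icc 1 ((t : ℕ) - 1)

noncomputable instance (N : ℕ) : Fintype (ParentSeq N) := by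
  unfold ParentSeq
  classical
  infer_instance

/-- The value of a parent sequence at `j` (junk value `0` outside `{2,…,N}`). -/
def pval {N : ℕ} (f : ParentSeq N) (j : ℕ) : ℕ :=
  if h : 2 ≤ j ∧ j ≤ N then (f ⟨j, Set.mem_Icc.mpr h⟩ : ℕ) else 0

/-- The degree `d_t(v_i)` of vertex `i` at time `t` in the tree determined by `f`. -/
def deg {N : ℕ} (f : ParentSeq N) (t i : ℕ) : ℕ :=
  ((Finset.Icc 2 t).filter (fun j => pval f j = i)).card + (if 2 ≤ i then 1 else 0)

/-- The Móri probability of the parent sequence `f`. -/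
noncomputable def moriP {N : ℕ} (β : ℝ) (f : ParentSeq N) : ℝ :=
  ∏ t ∈ Finset.Icc 2 N, ((deg f (t - 1) (pval f t) : ℝ) + β) / ((2 + β) * ((t : ℝ) - 1) - 2)

/-- Expectation of `X` under the Móri measure on parent sequences of length `N`. -/
noncomputable def moriE (N : ℕ) (β : ℝ) (X : ParentSeq N → ℝ) : ℝ :=
  ∑ f : ParentSeq N, moriP β f * X f

open Classical in
/-- Probability of an event under the Móri measure on parent sequences of length `N`. -/
noncomputable def moriPr (N : ℕ) (β : ℝ) (p : ParentSeq N → Prop) : ℝ :=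
  ∑ f : ParentSeq N, if p f then moriP β f else 0

/-- The index of the merged vertex containing tree vertex `t` when merging in blocks of `m`. -/
def blk (m t : ℕ) : ℕ := (t - 1) / m + 1

/-- The number `m(a,b)` of edges joining `u_a` and `u_b` in the Móri graph `G^n_{m,β}`. -/
def mult (n m : ℕ) (f : ParentSeq (n * m)) (a b : ℕ) : ℕ :=
  ((Finset.Icc 2 (n * m)).filter (fun t =>
    (blk m t = a ∧ blk m (pval f t) = b) ∨ (blk m t = b ∧ blk m (pval f t) = a))).card

/-- The degree `d(u_i)` of the merged vertex `u_i` in the Móri graph `G^n_{m,β}`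
(a loop contributes `2`). -/
def degU (n m : ℕ) (f : ParentSeq (n * m)) (i : ℕ) : ℕ :=
  ((Finset.Icc 2 (n * m)).filter (fun t => blk m t = i)).card +
  ((Finset.Icc 2 (n * m)).filter (fun t => blk m (pval f t) = i)).card

/-!
Outside its own block, each mixed moment of block weights and edge counts is multiplied at every
step by a deterministic factor. The second rising factorial moment of a block weight grows by
`1 + 2 / ((2 + β) t - 2) = γ (t + 1) / γ t`, where `γ t = Γ(t) / Γ(t - p)` and `p = 2 / (2 + β)`.
Following the moments through the blocks `a < b < c` in turn therefore factorizes the expected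
number of triangles on them exactly, as `A a * B b * C c`.

Within a block there are only `m` steps, so each factor satisfies a recursion of bounded length.
This gives `A a ∼ α a ^ (-p)`, `B b ∼ α' b ^ (-1)` and `C c ∼ α'' c ^ (p - 2)`, each with a relative
error `O(1 / n)`. Two summations raise the exponent to `1 - p` without losing a power saving in the
error, so that the last sum is a multiple of the harmonic sum plus a convergent series.
-/

open Asymptotics Filter Topology

/-! ### Sequences with a power-law asymptotic -/

/-- `x n = κ * n ^ r + O(n ^ (r - δ))` as `n → ∞`: the first-order asymptotics of a sequence,
with a saving of `δ` in the exponent of the error term. -/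
def HasPowerAsymp (x : ℕ → ℝ) (κ r δ : ℝ) : Prop :=
  (fun n ↦ x n - κ * (n : ℝ) ^ r) =O[atTop] fun n ↦ (n : ℝ) ^ (r - δ)

lemma isBigO_natCast_rpow {r s : ℝ} (h : r ≤ s) :
    (fun n : ℕ ↦ (n : ℝ) ^ r) =O[atTop] fun n ↦ (n : ℝ) ^ s := by
  refine IsBigO.of_bound 1 ?_
  filter_upwards [eventually_ge_atTop 1] with n hn
  have hn : (1 : ℝ) ≤ n := by exact_mod_cast hn
  rw [Real.norm_of_nonneg (by positivity), Real.norm_of_nonneg (by positivity), one_mul]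
  exact Real.rpow_le_rpow_of_exponent_le hn h

namespace HasPowerAsymp

variable {x y : ℕ → ℝ} {κ κ' r r' δ : ℝ}

lemma congr' (hx : HasPowerAsymp x κ r δ) (hxy : x =ᶠ[atTop] y) (hκ : κ = κ') (hr : r = r') :
    HasPowerAsymp y κ' r' δ := by
  subst hκ hr
  exact IsBigO.congr' hx (hxy.mono fun n hn ↦ by simp only [hn]) .rfl

lemma congr (hx : HasPowerAsymp x κ r δ) (hxy : ∀ n, x n = y n) (hκ : κ = κ') (hr : r = r') :
    HasPowerAsymp y κ' r' δ :=
  hx.congr' (.of_forall hxy) hκ hr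

lemma const (κ δ : ℝ) : HasPowerAsymp (fun _ ↦ κ) κ 0 δ := by
  simpa [HasPowerAsymp] using isBigO_zero _ _

lemma zero (r δ : ℝ) : HasPowerAsymp (fun _ ↦ 0) 0 r δ := by
  simpa [HasPowerAsymp] using isBigO_zero _ _

lemma rpow_self (r δ : ℝ) : HasPowerAsymp (fun n ↦ (n : ℝ) ^ r) 1 r δ := by
  simpa [HasPowerAsymp] using isBigO_zero _ _

lemma add (hx : HasPowerAsymp x κ r δ) (hy : HasPowerAsymp y κ' r δ) :
    HasPowerAsymp (fun n ↦ x n + y n) (κ + κ') r δ :=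
  (IsBigO.add hx hy).congr_left fun n ↦ by ring

lemma isBigO (hx : HasPowerAsymp x κ r δ) (hδ : 0 ≤ δ) : x =O[atTop] fun n ↦ (n : ℝ) ^ r :=
  ((hx.trans (isBigO_natCast_rpow (by linarith))).add
    ((isBigO_refl _ _).const_mul_left κ)).congr_left fun n ↦ by ring

lemma mul (hx : HasPowerAsymp x κ r δ) (hy : HasPowerAsymp y κ' r' δ) (hδ : 0 ≤ δ) :
    HasPowerAsymp (fun n ↦ x n * y n) (κ * κ') (r + r') δ := by
  have hκ : (fun n : ℕ ↦ κ * (n : ℝ) ^ r) =O[atTop] fun n : ℕ ↦ (n : ℝ) ^ r :=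
    (isBigO_refl _ _).const_mul_left κ
  have hxy := IsBigO.mul_atTop_rpow_natCast_of_isBigO_rpow _ _ (r + r' - δ) hx (hy.isBigO hδ)
    (by linarith)
  have hyx := IsBigO.mul_atTop_rpow_natCast_of_isBigO_rpow _ _ (r + r' - δ) hκ hy (by linarith)
  refine (hxy.add hyx).congr' ?_ .rfl
  filter_upwards [eventually_gt_atTop 0] with n hn
  simp only [Pi.mul_apply]
  rw [Real.rpow_add (by exact_mod_cast hn)]
  ring

lemma const_mul (c : ℝ) (hx : HasPowerAsymp x κ r δ) :
    HasPowerAsymp (fun n ↦ c * x n) (c * κ) r δ :=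
  (IsBigO.const_mul_left hx c).congr_left fun n ↦ by ring

lemma lift (hx : HasPowerAsymp x κ r δ) (hδ : 0 ≤ δ) (h : r + δ ≤ r') :
    HasPowerAsymp x 0 r' δ := by
  simpa [HasPowerAsymp] using (hx.isBigO hδ).trans (isBigO_natCast_rpow (by linarith))

lemma mono {δ' : ℝ} (hx : HasPowerAsymp x κ r δ) (h : δ' ≤ δ) : HasPowerAsymp x κ r δ' :=
  hx.trans (isBigO_natCast_rpow (by linarith))

lemma one_add (hx : HasPowerAsymp x κ (-δ) δ) (hδ : 0 ≤ δ) :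
    HasPowerAsymp (fun n ↦ 1 + x n) 1 0 δ :=
  ((const 1 δ).add (hx.lift hδ (by simp))).congr (fun _ ↦ rfl) (add_zero 1) rfl

lemma isBigO_div_rpow_sub (hx : HasPowerAsymp x κ r δ) :
    (fun n ↦ x n / (n : ℝ) ^ r - κ) =O[atTop] fun n ↦ (n : ℝ) ^ (-δ) := by
  refine (IsBigO.mul_atTop_rpow_natCast_of_isBigO_rpow _ (-r) (-δ) hx (isBigO_refl _ _)
    (by linarith)).congr' ?_ .rfl
  filter_upwards [eventually_gt_atTop 0] with n hn
  have hn : (0 : ℝ) < n := by exact_mod_cast hn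
  have := Real.rpow_pos_of_pos hn r
  simp only [Pi.mul_apply]
  rw [Real.rpow_neg hn.le]
  field_simp

lemma tendsto_div_rpow (hx : HasPowerAsymp x κ r δ) (hδ : 0 < δ) :
    Tendsto (fun n ↦ x n / (n : ℝ) ^ r) atTop (𝓝 κ) := by
  have h0 := hx.isBigO_div_rpow_sub.trans_tendsto
    ((tendsto_rpow_neg_atTop hδ).comp tendsto_natCast_atTop_atTop)
  simpa using h0.add_const κ

lemma rpow (hx : HasPowerAsymp x κ r δ) (hδ : 0 < δ) (hκ : 0 < κ) (s : ℝ) :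
    HasPowerAsymp (fun n ↦ x n ^ s) (κ ^ s) (r * s) δ := by
  have hlim := hx.tendsto_div_rpow hδ
  have hderiv : HasDerivAt (fun u : ℝ ↦ u ^ s) (s * κ ^ (s - 1)) κ :=
    Real.hasDerivAt_rpow_const (.inl hκ.ne')
  have hratio := (hderiv.isBigO_sub.comp_tendsto hlim).trans hx.isBigO_div_rpow_sub
  refine (IsBigO.mul_atTop_rpow_natCast_of_isBigO_rpow _ (r * s) (r * s - δ) hratio
    (isBigO_refl _ _) (by linarith)).congr' ?_ .rfl
  filter_upwards [eventually_gt_atTop 0, hlim.eventually_const_lt hκ] with n hn hpos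
  have hn : (0 : ℝ) < n := by exact_mod_cast hn
  simp only [Pi.mul_apply, Function.comp_apply]
  rw [sub_mul, Real.rpow_mul hn.le, ← Real.mul_rpow hpos.le (by positivity),
    div_mul_cancel₀ _ (Real.rpow_pos_of_pos hn r).ne']

lemma inv (hx : HasPowerAsymp x κ r δ) (hδ : 0 < δ) (hκ : 0 < κ) :
    HasPowerAsymp (fun n ↦ (x n)⁻¹) κ⁻¹ (-r) δ := by
  simpa only [Real.rpow_neg_one, mul_neg_one] using hx.rpow hδ hκ (-1)

lemma comp {t : ℕ → ℕ} {μ : ℝ} (hx : HasPowerAsymp x κ r δ)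
    (ht : HasPowerAsymp (fun n ↦ (t n : ℝ)) μ 1 δ) (hδ : 0 < δ) (hμ : 0 < μ) :
    HasPowerAsymp (fun n ↦ x (t n)) (κ * μ ^ r) r δ := by
  have htop : Tendsto t atTop atTop := by
    have h := (ht.tendsto_div_rpow hδ).pos_mul_atTop hμ
      (tendsto_natCast_atTop_atTop (R := ℝ))
    refine tendsto_natCast_atTop_iff.mp (h.congr' ?_)
    filter_upwards [eventually_gt_atTop 0] with n hn
    have hn : (0 : ℝ) < n := by exact_mod_cast hn
    rw [Real.rpow_one, div_mul_cancel₀ _ hn.ne']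
  have hpow (s : ℝ) : HasPowerAsymp (fun n ↦ (t n : ℝ) ^ s) (μ ^ s) s δ :=
    (ht.rpow hδ hμ s).congr (fun _ ↦ rfl) rfl (one_mul s)
  have herr := (hx.comp_tendsto htop).trans ((hpow (r - δ)).isBigO hδ.le)
  refine (herr.add ((hpow r).const_mul κ)).congr_left fun n ↦ ?_
  simp only [Function.comp_apply]
  ring

end HasPowerAsymp

/-! ### Sums of power-law sequences -/

-- Concavity of `x ^ r`: the graph lies below its tangent at `x`.
lemma add_rpow_le_rpow_add_mul {x s r : ℝ} (hx : 0 < x) (hs : 0 ≤ x + s) (hr₀ : 0 ≤ r)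
    (hr₁ : r ≤ 1) : (x + s) ^ r ≤ x ^ r + s * (r * x ^ (r - 1)) := by
  have hbern : (1 + s / x) ^ r ≤ 1 + r * (s / x) :=
    rpow_one_add_le_one_add_mul_self (by rw [le_div_iff₀ hx]; linarith) hr₀ hr₁
  have h1 : 0 ≤ 1 + s / x := by
    rw [one_add_div hx.ne']
    positivity
  calc (x + s) ^ r = x ^ r * (1 + s / x) ^ r := by
        rw [← Real.mul_rpow hx.le h1, mul_one_add, mul_div_cancel₀ _ hx.ne']
    _ ≤ x ^ r * (1 + r * (s / x)) := by gcongr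
    _ = x ^ r + s * (r * x ^ (r - 1)) := by
        rw [Real.rpow_sub_one hx.ne']
        ring

lemma mul_sum_rpow_sub_one_bounds {r : ℝ} (hr₀ : 0 < r) (hr₁ : r ≤ 1) {n : ℕ} (hn : 1 ≤ n) :
    (n : ℝ) ^ r - 1 ≤ r * ∑ k ∈ Ico 1 n, (k : ℝ) ^ (r - 1) ∧
      r * ∑ k ∈ Ico 1 n, (k : ℝ) ^ (r - 1) ≤ ((n : ℝ) - 1) ^ r := by
  induction n, hn using Nat.le_induction with
  | base => simp [hr₀.ne']
  | succ n hn ih =>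
    have hn1 : (1 : ℝ) ≤ n := by exact_mod_cast hn
    have hup := add_rpow_le_rpow_add_mul (x := n) (s := 1) (by linarith) (by linarith) hr₀.le hr₁
    have hdown :=
      add_rpow_le_rpow_add_mul (x := n) (s := -1) (by linarith) (by linarith) hr₀.le hr₁
    rw [← sub_eq_add_neg] at hdown
    rw [sum_Ico_succ_top hn, mul_add]
    push_cast
    rw [add_sub_cancel_right]
    constructor <;> linarith [ih.1, ih.2]

lemma sum_rpow_sub_one_hasPowerAsymp {r δ : ℝ} (hr₀ : 0 < r) (hr₁ : r ≤ 1) (hδ : δ ≤ r) :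
    HasPowerAsymp (fun n ↦ ∑ k ∈ Ico 1 n, (k : ℝ) ^ (r - 1)) r⁻¹ r δ := by
  refine IsBigO.of_bound r⁻¹ ?_
  filter_upwards [eventually_ge_atTop 1] with n hn
  have hn1 : (1 : ℝ) ≤ n := by exact_mod_cast hn
  obtain ⟨hlow, hup⟩ := mul_sum_rpow_sub_one_bounds hr₀ hr₁ hn
  have hmono : ((n : ℝ) - 1) ^ r ≤ (n : ℝ) ^ r :=
    Real.rpow_le_rpow (by linarith) (by linarith) hr₀.le
  have hone : 1 ≤ (n : ℝ) ^ (r - δ) := Real.one_le_rpow hn1 (by linarith)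
  have hdist : |r * ∑ k ∈ Ico 1 n, (k : ℝ) ^ (r - 1) - (n : ℝ) ^ r| ≤ (n : ℝ) ^ (r - δ) := by
    rw [abs_le]
    constructor <;> linarith
  rw [Real.norm_eq_abs, Real.norm_of_nonneg (by positivity)]
  calc |∑ k ∈ Ico 1 n, (k : ℝ) ^ (r - 1) - r⁻¹ * (n : ℝ) ^ r|
      = |r⁻¹ * (r * ∑ k ∈ Ico 1 n, (k : ℝ) ^ (r - 1) - (n : ℝ) ^ r)| := by
        rw [mul_sub, inv_mul_cancel_left₀ hr₀.ne']
    _ = r⁻¹ * |r * ∑ k ∈ Ico 1 n, (k : ℝ) ^ (r - 1) - (n : ℝ) ^ r| := by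
        rw [abs_mul, abs_of_pos (inv_pos.mpr hr₀)]
    _ ≤ r⁻¹ * (n : ℝ) ^ (r - δ) := by gcongr

lemma exists_bound_of_isBigO_rpow {x : ℕ → ℝ} {s : ℝ}
    (hx : x =O[atTop] fun n : ℕ ↦ (n : ℝ) ^ s) :
    ∃ C, 0 < C ∧ ∀ n, 1 ≤ n → |x n| ≤ C * (n : ℝ) ^ s := by
  obtain ⟨C, hC, hbound⟩ := bound_of_isBigO_nat_atTop hx
  refine ⟨C, hC, fun n hn ↦ ?_⟩
  have hpos : (0 : ℝ) < (n : ℝ) ^ s := Real.rpow_pos_of_pos (by exact_mod_cast hn) s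
  simpa [abs_of_pos hpos] using hbound hpos.ne'

lemma isBigO_sum_Ico_rpow {x : ℕ → ℝ} {r : ℝ} (hr₀ : 0 < r) (hr₁ : r ≤ 1)
    (hx : x =O[atTop] fun n ↦ (n : ℝ) ^ (r - 1)) :
    (fun n ↦ ∑ k ∈ Ico 1 n, x k) =O[atTop] fun n ↦ (n : ℝ) ^ r := by
  obtain ⟨C, -, hC⟩ := exists_bound_of_isBigO_rpow hx
  refine IsBigO.trans (.of_bound C (.of_forall fun n ↦ ?_))
    ((sum_rpow_sub_one_hasPowerAsymp hr₀ hr₁ hr₀.le).isBigO le_rfl)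
  rw [Real.norm_of_nonneg (by positivity : 0 ≤ ∑ k ∈ Ico 1 n, (k : ℝ) ^ (r - 1)), mul_sum]
  exact norm_sum_le_of_le _ fun k hk ↦ hC k (mem_Ico.mp hk).1

lemma HasPowerAsymp.sum_Ico {x : ℕ → ℝ} {κ r δ : ℝ} (hx : HasPowerAsymp x κ (r - 1) δ)
    (hδ₀ : 0 ≤ δ) (hδ : δ < r) (hr : r ≤ 1) :
    HasPowerAsymp (fun n ↦ ∑ k ∈ Ico 1 n, x k) (κ / r) r δ := by
  have herr : (fun n ↦ ∑ k ∈ Ico 1 n, (x k - κ * (k : ℝ) ^ (r - 1)))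
      =O[atTop] fun n ↦ (n : ℝ) ^ (r - δ) :=
    isBigO_sum_Ico_rpow (by linarith) (by linarith)
      (IsBigO.congr_right hx fun n ↦ by rw [sub_right_comm])
  have hmain := (sum_rpow_sub_one_hasPowerAsymp (by linarith) hr hδ.le).const_mul κ
  refine (herr.add hmain).congr_left fun n ↦ ?_
  rw [sum_sub_distrib, ← mul_sum]
  ring

lemma abs_sum_inv_sub_log_le_one {n : ℕ} (hn : 1 ≤ n) :
    |∑ k ∈ Icc 1 n, (k : ℝ)⁻¹ - Real.log n| ≤ 1 := by
  have hharm : ((harmonic n : ℚ) : ℝ) = ∑ k ∈ Icc 1 n, (k : ℝ)⁻¹ := by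
    rw [harmonic_eq_sum_Icc]
    push_cast
    rfl
  have hlow := log_add_one_le_harmonic n
  have hup := harmonic_le_one_add_log n
  have hlog : Real.log n ≤ Real.log ((n + 1 : ℕ) : ℝ) :=
    Real.log_le_log (by exact_mod_cast hn) (by push_cast; linarith)
  rw [hharm] at hlow hup
  rw [abs_le]
  constructor <;> linarith

lemma HasPowerAsymp.exists_abs_sum_sub_log_le {x : ℕ → ℝ} {κ δ : ℝ}
    (hx : HasPowerAsymp x κ (-1) δ) (hδ : 0 < δ) :
    ∃ K, 0 < K ∧ ∀ n : ℕ, 1 ≤ n → |∑ k ∈ Icc 1 n, x k - κ * Real.log n| ≤ K := by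
  obtain ⟨C, hC, herr⟩ := exists_bound_of_isBigO_rpow hx
  have hsummable : Summable fun n : ℕ ↦ (n : ℝ) ^ (-1 - δ) :=
    Real.summable_nat_rpow.mpr (by linarith)
  set S := ∑' n : ℕ, (n : ℝ) ^ (-1 - δ)
  have hS : 0 ≤ S := tsum_nonneg fun n ↦ by positivity
  refine ⟨C * S + |κ| + 1, by linarith [mul_nonneg hC.le hS, abs_nonneg κ], fun n hn ↦ ?_⟩
  have hdiff : |∑ k ∈ Icc 1 n, (x k - κ * (k : ℝ)⁻¹)| ≤ C * S := by
    calc |∑ k ∈ Icc 1 n, (x k - κ * (k : ℝ)⁻¹)|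
        ≤ ∑ k ∈ Icc 1 n, C * (k : ℝ) ^ (-1 - δ) :=
          (abs_sum_le_sum_abs _ _).trans <| sum_le_sum fun k hk ↦ by
            simpa [Real.rpow_neg_one] using herr k (mem_Icc.mp hk).1
      _ ≤ C * S := by
          rw [← mul_sum]
          gcongr
          exact hsummable.sum_le_tsum _ fun k _ ↦ by positivity
  have hharm := mul_le_mul_of_nonneg_left (abs_sum_inv_sub_log_le_one hn) (abs_nonneg κ)
  rw [← abs_mul, mul_one] at hharm
  have hsplit : ∑ k ∈ Icc 1 n, x k - κ * Real.log n = ∑ k ∈ Icc 1 n, (x k - κ * (k : ℝ)⁻¹)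
      + κ * (∑ k ∈ Icc 1 n, (k : ℝ)⁻¹ - Real.log n) := by
    rw [sum_sub_distrib, ← mul_sum]
    ring
  rw [hsplit]
  linarith [abs_add_le (∑ k ∈ Icc 1 n, (x k - κ * (k : ℝ)⁻¹))
    (κ * (∑ k ∈ Icc 1 n, (k : ℝ)⁻¹ - Real.log n))]

/-! ### Ratios of Gamma functions -/

/-- The quotient `Γ(x) / Γ(x - p)`, which grows like `x ^ p` and solves the recursion
`u (x + 1) = x / (x - p) * u x` governing the second factorial moment of a block weight. -/
noncomputable def gammaRatio (p x : ℝ) : ℝ := Real.Gamma x / Real.Gamma (x - p)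

section GammaRatio

variable {p x : ℝ}

lemma gammaRatio_pos (hx : 0 < x) (hp : p < x) : 0 < gammaRatio p x :=
  div_pos (Real.Gamma_pos_of_pos hx) (Real.Gamma_pos_of_pos (sub_pos.mpr hp))

lemma gammaRatio_add_one (hx : x ≠ 0) (hp : x ≠ p) :
    gammaRatio p (x + 1) = x / (x - p) * gammaRatio p x := by
  rw [gammaRatio, gammaRatio, add_sub_right_comm, Real.Gamma_add_one hx,
    Real.Gamma_add_one (sub_ne_zero.mpr hp), mul_div_mul_comm]

lemma gammaRatio_le_rpow (hp₀ : 0 < p) (hp₁ : p < 1) (hx : p < x) : gammaRatio p x ≤ x ^ p := by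
  have hpos : 0 < x - p := by linarith
  have hconv := Real.Gamma_mul_add_mul_le_rpow_Gamma_mul_rpow_Gamma hpos
    (by linarith : 0 < x - p + 1) (sub_pos.mpr hp₁) hp₀ (by ring)
  have hΓ := Real.Gamma_pos_of_pos hpos
  rw [show (1 - p) * (x - p) + p * (x - p + 1) = x by ring, Real.Gamma_add_one hpos.ne',
    Real.mul_rpow hpos.le hΓ.le, mul_left_comm, ← Real.rpow_add hΓ, sub_add_cancel,
    Real.rpow_one] at hconv
  calc gammaRatio p x ≤ (x - p) ^ p := (div_le_iff₀ hΓ).mpr hconv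
    _ ≤ x ^ p := by gcongr; linarith

lemma rpow_le_gammaRatio (hp₀ : 0 < p) (hp₁ : p < 1) (hx : 1 < x) :
    (x - 1) ^ p ≤ gammaRatio p x := by
  have hpos : 0 < x - 1 := by linarith
  have hconv := Real.Gamma_mul_add_mul_le_rpow_Gamma_mul_rpow_Gamma hpos
    (by linarith : 0 < x - 1 + 1) hp₀ (sub_pos.mpr hp₁) (by ring)
  have hΓ := Real.Gamma_pos_of_pos hpos
  have hadd : Real.Gamma x = (x - 1) * Real.Gamma (x - 1) := by
    rw [← Real.Gamma_add_one hpos.ne', sub_add_cancel]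
  have hpow : (x - 1) ^ p * (x - 1) ^ (1 - p) = x - 1 := by
    rw [← Real.rpow_add hpos, add_sub_cancel, Real.rpow_one]
  rw [gammaRatio, le_div_iff₀ (Real.Gamma_pos_of_pos (by linarith))]
  rw [show p * (x - 1) + (1 - p) * (x - 1 + 1) = x - p by ring, Real.Gamma_add_one hpos.ne',
    Real.mul_rpow hpos.le hΓ.le, mul_left_comm, ← Real.rpow_add hΓ, add_sub_cancel,
    Real.rpow_one] at hconv
  calc (x - 1) ^ p * Real.Gamma (x - p)
      ≤ (x - 1) ^ p * ((x - 1) ^ (1 - p) * Real.Gamma (x - 1)) := by gcongr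
    _ = Real.Gamma x := by rw [← mul_assoc, hpow, hadd]

lemma gammaRatio_hasPowerAsymp (hp₀ : 0 < p) (hp₁ : p < 1) :
    HasPowerAsymp (fun n ↦ gammaRatio p n) 1 p 1 := by
  refine IsBigO.of_bound 1 ?_
  filter_upwards [eventually_gt_atTop 1] with n hn
  have hn : (1 : ℝ) < n := by exact_mod_cast hn
  have hup := gammaRatio_le_rpow hp₀ hp₁ (hp₁.trans hn)
  have hlow := rpow_le_gammaRatio hp₀ hp₁ hn
  have hshift : (n : ℝ) ^ p - (n : ℝ) ^ (p - 1) ≤ ((n : ℝ) - 1) ^ p := by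
    have hanti : (n : ℝ) ^ (p - 1) ≤ ((n : ℝ) - 1) ^ (p - 1) :=
      Real.rpow_le_rpow_of_nonpos (by linarith) (by linarith) (by linarith)
    calc (n : ℝ) ^ p - (n : ℝ) ^ (p - 1) = ((n : ℝ) - 1) * (n : ℝ) ^ (p - 1) := by
          rw [Real.rpow_sub_one (by linarith)]
          field_simp
      _ ≤ ((n : ℝ) - 1) * ((n : ℝ) - 1) ^ (p - 1) := by gcongr
      _ = ((n : ℝ) - 1) ^ p := by
          rw [Real.rpow_sub_one (by linarith), mul_div_cancel₀ _ (by linarith)]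
  rw [Real.norm_eq_abs, Real.norm_of_nonneg (by positivity), one_mul, one_mul, abs_le]
  constructor <;> linarith [Real.rpow_nonneg n.cast_nonneg (p - 1)]

end GammaRatio

/-! ### The Móri recursion -/

namespace ParentSeq

variable {t : ℕ}

/-- The extension of a parent sequence by letting the new vertex `t + 1` choose the parent `i`. -/
def snoc (f : ParentSeq t) (i : Set.Icc 1 t) : ParentSeq (t + 1) := fun s ↦
  if hs : (s : ℕ) ≤ t then f ⟨s, s.2.1, hs⟩
  else ⟨i, i.2.1, i.2.2.trans (Nat.le_sub_one_of_lt (not_le.mp hs))⟩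

/-- The restriction of a parent sequence to all vertices but the last. -/
def init (f : ParentSeq (t + 1)) : ParentSeq t := fun s ↦ f ⟨s, s.2.1, s.2.2.trans t.le_succ⟩

/-- A parent sequence of length `t + 1` is one of length `t` together with the parent of `t + 1`. -/
def snocEquiv (ht : 1 ≤ t) : ParentSeq t × Set.Icc 1 t ≃ ParentSeq (t + 1) where
  toFun x := x.1.snoc x.2
  invFun f := (f.init, f ⟨t + 1, Nat.succ_le_succ ht, le_rfl⟩)
  left_inv x := by
    refine Prod.ext (funext fun s ↦ ?_) ?_
    · exact dif_pos s.2.2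
    · exact dif_neg (by simp)
  right_inv f := by
    funext s
    by_cases hs : (s : ℕ) ≤ t
    · exact dif_pos hs
    · obtain ⟨s, hs₂, hst⟩ := s
      obtain rfl : s = t + 1 := by simp only at hs; omega
      exact dif_neg hs

lemma pval_mem {f : ParentSeq t} {j : ℕ} (hj : j ∈ Icc 2 t) : pval f j ∈ Ico 1 j := by
  have hj' := mem_Icc.mp hj
  rw [pval, dif_pos hj', mem_Ico]
  have := (f ⟨j, hj'⟩).2
  grind

variable (f : ParentSeq t) (i : Set.Icc 1 t)

lemma pval_snoc_of_le {j : ℕ} (hj : j ≤ t) : pval (f.snoc i) j = pval f j := by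
  by_cases h2 : 2 ≤ j
  · simp [pval, snoc, hj, h2, hj.trans t.le_succ]
  · simp [pval, h2]

lemma pval_snoc_last : pval (f.snoc i) (t + 1) = i := by
  have ht : 1 ≤ t := i.2.1.trans i.2.2
  simp [pval, snoc, ht]

lemma deg_snoc_of_le {s : ℕ} (hs : s ≤ t) (k : ℕ) : deg (f.snoc i) s k = deg f s k := by
  unfold deg
  congr 2
  refine filter_congr fun j hj ↦ ?_
  rw [pval_snoc_of_le f i ((mem_Icc.mp hj).2.trans hs)]

lemma deg_snoc_last (k : ℕ) :
    deg (f.snoc i) (t + 1) k = deg f t k + if (i : ℕ) = k then 1 else 0 := by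
  have ht : 1 ≤ t := i.2.1.trans i.2.2
  rw [← deg_snoc_of_le f i le_rfl, deg, deg, card_filter, card_filter,
    sum_Icc_succ_top (by omega), pval_snoc_last]
  ring

lemma deg_new_vertex (ht : 1 ≤ t) : deg f t (t + 1) = 1 := by
  have hempty : {j ∈ Icc 2 t | pval f j = t + 1} = ∅ := by
    refine filter_eq_empty_iff.mpr fun j hj h ↦ ?_
    have := mem_Ico.mp (pval_mem (f := f) hj)
    have := mem_Icc.mp hj
    omega
  rw [deg, hempty, card_empty, if_pos (by omega)]

lemma sum_deg (ht : 1 ≤ t) : ∑ i ∈ Icc 1 t, deg f t i = 2 * (t - 1) := by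
  have hchildren : ∑ i ∈ Icc 1 t, #{j ∈ Icc 2 t | pval f j = i} = t - 1 := by
    rw [← card_eq_sum_card_fiberwise]
    · simp
    · intro j hj
      have := mem_Ico.mp (pval_mem (f := f) hj)
      have := mem_Icc.mp hj
      simp only [coe_Icc, Set.mem_Icc]
      omega
  have hparents : #{i ∈ Icc 1 t | 2 ≤ i} = t - 1 := by
    rw [show {i ∈ Icc 1 t | 2 ≤ i} = Icc 2 t by grind, Nat.card_Icc]
    omega
  simp only [deg]
  rw [sum_add_distrib, hchildren, ← card_filter, hparents, two_mul]

lemma sum_deg_add (β : ℝ) (ht : 1 ≤ t) :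
    ∑ i ∈ Icc 1 t, ((deg f t i : ℝ) + β) = (2 + β) * t - 2 := by
  rw [sum_add_distrib, ← Nat.cast_sum, sum_deg f ht]
  push_cast [Nat.cast_sub ht]
  simp only [sum_const, Nat.card_Icc, add_tsub_cancel_right, nsmul_eq_mul]
  ring

lemma moriP_snoc (β : ℝ) :
    moriP β (f.snoc i) = moriP β f * (((deg f t i : ℝ) + β) / ((2 + β) * t - 2)) := by
  have ht : 1 ≤ t := i.2.1.trans i.2.2
  rw [moriP, prod_Icc_succ_top (by omega), pval_snoc_last, Nat.add_sub_cancel,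
    deg_snoc_of_le f i le_rfl, Nat.cast_add_one, add_sub_cancel_right]
  congr 1
  refine prod_congr rfl fun s hs ↦ ?_
  have hst := (mem_Icc.mp hs).2
  rw [pval_snoc_of_le f i hst, deg_snoc_of_le f i (by omega)]

end ParentSeq

/-- The probability per unit of weight (degree plus `β`) that vertex `t + 1` attaches to a given
vertex of a Móri tree with `t` vertices. -/
noncomputable def attachRate (β : ℝ) (t : ℕ) : ℝ := ((2 + β) * t - 2)⁻¹

section MoriExpectation

variable {β : ℝ} {t : ℕ}

lemma attachRate_den_pos (hβ : 0 < β) (ht : 1 ≤ t) : 0 < (2 + β) * (t : ℝ) - 2 := by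
  have ht' : (1 : ℝ) ≤ t := by exact_mod_cast ht
  nlinarith

lemma moriE_succ (ht : 1 ≤ t) (X : ParentSeq (t + 1) → ℝ) :
    moriE (t + 1) β X = moriE t β fun f ↦
      ∑ i : Set.Icc 1 t, attachRate β t * ((deg f t i : ℝ) + β) * X (f.snoc i) := by
  simp only [moriE]
  rw [← (ParentSeq.snocEquiv ht).sum_comp, Fintype.sum_prod_type]
  refine sum_congr rfl fun f _ ↦ ?_
  rw [mul_sum]
  refine sum_congr rfl fun i _ ↦ ?_
  change moriP β (f.snoc i) * X (f.snoc i) = _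
  rw [f.moriP_snoc, attachRate]
  ring

lemma moriE_sum {N : ℕ} {ι : Type*} (s : Finset ι) (X : ι → ParentSeq N → ℝ) :
    moriE N β (fun f ↦ ∑ k ∈ s, X k f) = ∑ k ∈ s, moriE N β (X k) := by
  simp only [moriE, mul_sum]
  exact sum_comm

lemma sum_attachRate_mul (hβ : 0 < β) (ht : 1 ≤ t) (f : ParentSeq t) :
    ∑ i : Set.Icc 1 t, attachRate β t * ((deg f t i : ℝ) + β) = 1 := by
  rw [← mul_sum, ← sum_subtype (Icc 1 t) (by simp) fun i ↦ (deg f t i : ℝ) + β, f.sum_deg_add β ht,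
    attachRate, inv_mul_cancel₀ (attachRate_den_pos hβ ht).ne']

lemma moriE_const (hβ : 0 < β) (ht : 1 ≤ t) (r : ℝ) : moriE t β (fun _ ↦ r) = r := by
  induction t, ht using Nat.le_induction with
  | base =>
    have hempty : IsEmpty (Set.Icc 2 1) := by simp
    have hunique : Unique (ParentSeq 1) := Pi.uniqueOfIsEmpty _
    simp [moriE, moriP]
  | succ t ht ih =>
    simpa only [moriE_succ ht, ← sum_mul, sum_attachRate_mul hβ ht, one_mul] using ih

end MoriExpectation

/-! ### The weights and edge counts of three blocks -/

/-- The indicator that the tree vertex `i` is merged into `u_a`. -/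
def inBlock (m a i : ℕ) : ℝ := if blk m i = a then 1 else 0

/-- The total weight (degree plus `β`) of the tree vertices merged into `u_a`. -/
noncomputable def blockWeight (β : ℝ) (m : ℕ) {t : ℕ} (f : ParentSeq t) (a : ℕ) : ℝ :=
  ∑ i ∈ Icc 1 t, inBlock m a i * ((deg f t i : ℝ) + β)

/-- The number of edges directed from a vertex of block `b` to a vertex of block `a`. -/
def edgeCount (m : ℕ) {t : ℕ} (f : ParentSeq t) (a b : ℕ) : ℕ :=
  #{j ∈ Icc 2 t | blk m j = b ∧ blk m (pval f j) = a}

/-- The data of a Móri tree needed to count the triangles on three blocks `a < b < c`: the weights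
`wa`, `wb` of the first two blocks and the numbers `ab`, `ac`, `bc` of edges between the blocks. -/
structure TriangleState where
  (wa wb ab ac bc : ℝ)

/-- The update of a state when a vertex is added to the tree; `da`, `db`, `dc` indicate the block
containing the new vertex, and `ha`, `hb` whether its parent lies in the block `a` or `b`. -/
def TriangleState.step (β : ℝ) (s : TriangleState) (da db dc ha hb : ℝ) : TriangleState where
  wa := s.wa + ha + da * (1 + β)
  wb := s.wb + hb + db * (1 + β)
  ab := s.ab + db * ha
  ac := s.ac + dc * ha
  bc := s.bc + dc * hb

/-- The state of the blocks `a`, `b`, `c` in the tree determined by `f`. -/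
noncomputable def triangleState (β : ℝ) (m a b c : ℕ) {t : ℕ} (f : ParentSeq t) :
    TriangleState where
  wa := blockWeight β m f a
  wb := blockWeight β m f b
  ab := edgeCount m f a b
  ac := edgeCount m f a c
  bc := edgeCount m f b c

/-- The expectation of a function of the state of the blocks `a`, `b`, `c` in a Móri tree with `t`
vertices. -/
noncomputable def stateE (β : ℝ) (m a b c t : ℕ) : (TriangleState → ℝ) →ₗ[ℝ] ℝ :=
  ∑ f : ParentSeq t, moriP β f • LinearMap.proj (triangleState β m a b c f)

section States

variable {β : ℝ} {m a b c t : ℕ}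

lemma blockWeight_snoc (f : ParentSeq t) (i : Set.Icc 1 t) (a : ℕ) :
    blockWeight β m (f.snoc i) a =
      blockWeight β m f a + inBlock m a i + inBlock m a (t + 1) * (1 + β) := by
  have hnew : (i : ℕ) ≠ t + 1 := (Nat.lt_succ_of_le i.2.2).ne
  have hparent : ∑ k ∈ Icc 1 t, inBlock m a k * (if (i : ℕ) = k then 1 else 0) = inBlock m a i := by
    simp [i.2.2, Nat.one_le_iff_ne_zero.mp i.2.1]
  rw [blockWeight, sum_Icc_succ_top (by omega), f.deg_snoc_last, if_neg hnew,
    f.deg_new_vertex (i.2.1.trans i.2.2), blockWeight, ← hparent, ← sum_add_distrib]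
  congr 1
  · refine sum_congr rfl fun k _ ↦ ?_
    rw [f.deg_snoc_last]
    push_cast
    ring
  · simp

lemma edgeCount_snoc (f : ParentSeq t) (i : Set.Icc 1 t) (a b : ℕ) :
    (edgeCount m (f.snoc i) a b : ℝ) =
      edgeCount m f a b + inBlock m b (t + 1) * inBlock m a i := by
  have ht : 1 ≤ t := i.2.1.trans i.2.2
  have hold : ∀ j ∈ Icc 2 t, pval (f.snoc i) j = pval f j :=
    fun j hj ↦ f.pval_snoc_of_le i (mem_Icc.mp hj).2
  rw [edgeCount, card_filter, sum_Icc_succ_top (by omega), f.pval_snoc_last, edgeCount, card_filter,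
    sum_congr rfl fun j hj ↦ by rw [hold j hj]]
  simp only [inBlock, Nat.cast_add, ite_and]
  split_ifs <;> simp

lemma triangleState_snoc (f : ParentSeq t) (i : Set.Icc 1 t) :
    triangleState β m a b c (f.snoc i) = (triangleState β m a b c f).step β (inBlock m a (t + 1))
      (inBlock m b (t + 1)) (inBlock m c (t + 1)) (inBlock m a i) (inBlock m b i) := by
  simp only [triangleState, TriangleState.step, blockWeight_snoc, edgeCount_snoc]

lemma stateE_eq_moriE (φ : TriangleState → ℝ) :
    stateE β m a b c t φ = moriE t β fun f ↦ φ (triangleState β m a b c f) := by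
  simp [stateE, moriE]

lemma sum_attachRate_mul_inBlock (hβ : 0 < β) (ht : 1 ≤ t) (hab : a ≠ b) (f : ParentSeq t)
    (g : ℝ → ℝ → ℝ) :
    ∑ i : Set.Icc 1 t, attachRate β t * ((deg f t i : ℝ) + β) * g (inBlock m a i) (inBlock m b i) =
      attachRate β t * blockWeight β m f a * g 1 0 + attachRate β t * blockWeight β m f b * g 0 1 +
        (1 - attachRate β t * blockWeight β m f a - attachRate β t * blockWeight β m f b) *
          g 0 0 := by
  have hsplit (i : ℕ) : g (inBlock m a i) (inBlock m b i) =
      inBlock m a i * (g 1 0 - g 0 0) + inBlock m b i * (g 0 1 - g 0 0) + g 0 0 := by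
    unfold inBlock
    split_ifs <;> first | omega | simp
  have hweight (a : ℕ) : ∑ i : Set.Icc 1 t, attachRate β t * ((deg f t i : ℝ) + β) * inBlock m a i =
      attachRate β t * blockWeight β m f a := by
    rw [blockWeight, sum_subtype (Icc 1 t) (p := (· ∈ Set.Icc 1 t)) (by simp), mul_sum]
    exact sum_congr rfl fun i _ ↦ by ring
  have hdistrib (w x y u v r : ℝ) : w * (x * u + y * v + r) = w * x * u + w * y * v + w * r := by
    ring
  simp only [hsplit, hdistrib, sum_add_distrib, ← sum_mul, hweight, sum_attachRate_mul hβ ht]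
  ring

lemma stateE_succ (hβ : 0 < β) (ht : 1 ≤ t) (hab : a ≠ b) (φ : TriangleState → ℝ) :
    stateE β m a b c (t + 1) φ = stateE β m a b c t fun s ↦
      let next := s.step β (inBlock m a (t + 1)) (inBlock m b (t + 1)) (inBlock m c (t + 1))
      attachRate β t * s.wa * φ (next 1 0) + attachRate β t * s.wb * φ (next 0 1) +
        (1 - attachRate β t * s.wa - attachRate β t * s.wb) * φ (next 0 0) := by
  simp only [stateE_eq_moriE, moriE_succ ht, triangleState_snoc]
  congr 1 with f
  exact sum_attachRate_mul_inBlock hβ ht hab f fun ha hb ↦ φ ((triangleState β m a b c f).step β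
    (inBlock m a (t + 1)) (inBlock m b (t + 1)) (inBlock m c (t + 1)) ha hb)

lemma stateE_const (hβ : 0 < β) (ht : 1 ≤ t) (r : ℝ) : stateE β m a b c t (fun _ ↦ r) = r := by
  rw [stateE_eq_moriE, moriE_const hβ ht]

lemma mul_stateE (r : ℝ) (φ : TriangleState → ℝ) :
    r * stateE β m a b c t φ = stateE β m a b c t fun s ↦ r * φ s :=
  ((stateE β m a b c t).map_smul r φ).symm

lemma stateE_add (φ ψ : TriangleState → ℝ) :
    stateE β m a b c t φ + stateE β m a b c t ψ = stateE β m a b c t fun s ↦ φ s + ψ s :=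
  ((stateE β m a b c t).map_add φ ψ).symm

end States

/-! ### One-step recursions for the moments -/

/-- The second rising factorial of the weight of block `a`. -/
def TriangleState.rising (s : TriangleState) : ℝ := s.wa * (s.wa + 1)

section Recursions

open TriangleState

variable {β : ℝ} {m a b c t : ℕ}

lemma stateE_wa_succ_in_a (hβ : 0 < β) (ht : 1 ≤ t) (hab : a ≠ b) (ha : inBlock m a (t + 1) = 1) :
    stateE β m a b c (t + 1) wa =
      (1 + attachRate β t) * stateE β m a b c t wa + (1 + β) := by
  rw [stateE_succ hβ ht hab, ← stateE_const (m := m) (a := a) (b := b) (c := c) hβ ht (1 + β),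
    mul_stateE, stateE_add]
  congr 1 with s
  simp only [step, ha]
  ring

lemma stateE_rising_succ_in_a (hβ : 0 < β) (ht : 1 ≤ t) (hab : a ≠ b)
    (ha : inBlock m a (t + 1) = 1) :
    stateE β m a b c (t + 1) rising =
      (1 + 2 * attachRate β t) * stateE β m a b c t rising +
        2 * (1 + β) * (1 + attachRate β t) * stateE β m a b c t wa + (1 + β) * (2 + β) := by
  rw [stateE_succ hβ ht hab,
    ← stateE_const (m := m) (a := a) (b := b) (c := c) hβ ht ((1 + β) * (2 + β)),
    mul_stateE, mul_stateE, stateE_add, stateE_add]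
  congr 1 with s
  simp only [step, rising, ha]
  ring

lemma stateE_rising_succ (hβ : 0 < β) (ht : 1 ≤ t) (hab : a ≠ b) (ha : inBlock m a (t + 1) = 0) :
    stateE β m a b c (t + 1) rising =
      (1 + 2 * attachRate β t) * stateE β m a b c t rising := by
  rw [stateE_succ hβ ht hab, mul_stateE]
  congr 1 with s
  simp only [step, rising, ha]
  ring

lemma stateE_ab_wa_succ_in_b (hβ : 0 < β) (ht : 1 ≤ t) (hab : a ≠ b) (ha : inBlock m a (t + 1) = 0)
    (hb : inBlock m b (t + 1) = 1) :
    stateE β m a b c (t + 1) (ab * wa) =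
      (1 + attachRate β t) * stateE β m a b c t (ab * wa) +
        attachRate β t * stateE β m a b c t rising := by
  rw [stateE_succ hβ ht hab, mul_stateE, mul_stateE, stateE_add]
  congr 1 with s
  simp only [step, rising, Pi.mul_apply, ha, hb]
  ring

lemma stateE_rising_wb_succ_in_b (hβ : 0 < β) (ht : 1 ≤ t) (hab : a ≠ b)
    (ha : inBlock m a (t + 1) = 0) (hb : inBlock m b (t + 1) = 1) :
    stateE β m a b c (t + 1) (rising * wb) =
      (1 + 3 * attachRate β t) * stateE β m a b c t (rising * wb) +
        (1 + β) * (1 + 2 * attachRate β t) * stateE β m a b c t rising := by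
  rw [stateE_succ hβ ht hab, mul_stateE, mul_stateE, stateE_add]
  congr 1 with s
  simp only [step, rising, Pi.mul_apply, ha, hb]
  ring

lemma stateE_ab_wa_wb_succ_in_b (hβ : 0 < β) (ht : 1 ≤ t) (hab : a ≠ b)
    (ha : inBlock m a (t + 1) = 0) (hb : inBlock m b (t + 1) = 1) :
    stateE β m a b c (t + 1) (ab * wa * wb) =
      (1 + 2 * attachRate β t) * stateE β m a b c t (ab * wa * wb) +
        (1 + β) * (1 + attachRate β t) * stateE β m a b c t (ab * wa) +
        attachRate β t * stateE β m a b c t (rising * wb) +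
        (1 + β) * attachRate β t * stateE β m a b c t rising := by
  rw [stateE_succ hβ ht hab, mul_stateE, mul_stateE, mul_stateE, mul_stateE, stateE_add, stateE_add,
    stateE_add]
  congr 1 with s
  simp only [step, rising, Pi.mul_apply, ha, hb]
  ring

lemma stateE_ab_wa_wb_succ (hβ : 0 < β) (ht : 1 ≤ t) (hab : a ≠ b) (ha : inBlock m a (t + 1) = 0)
    (hb : inBlock m b (t + 1) = 0) :
    stateE β m a b c (t + 1) (ab * wa * wb) =
      (1 + 2 * attachRate β t) * stateE β m a b c t (ab * wa * wb) := by
  rw [stateE_succ hβ ht hab, mul_stateE]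
  congr 1 with s
  simp only [step, Pi.mul_apply, ha, hb]
  ring

lemma stateE_ab_ac_wb_succ_in_c (hβ : 0 < β) (ht : 1 ≤ t) (hab : a ≠ b)
    (hb : inBlock m b (t + 1) = 0) (hc : inBlock m c (t + 1) = 1) :
    stateE β m a b c (t + 1) (ab * ac * wb) =
      (1 + attachRate β t) * stateE β m a b c t (ab * ac * wb) +
        attachRate β t * stateE β m a b c t (ab * wa * wb) := by
  rw [stateE_succ hβ ht hab, mul_stateE, mul_stateE, stateE_add]
  congr 1 with s
  simp only [step, Pi.mul_apply, hb, hc]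
  ring

lemma stateE_ab_bc_wa_succ_in_c (hβ : 0 < β) (ht : 1 ≤ t) (hab : a ≠ b)
    (ha : inBlock m a (t + 1) = 0) (hb : inBlock m b (t + 1) = 0)
    (hc : inBlock m c (t + 1) = 1) :
    stateE β m a b c (t + 1) (ab * bc * wa) =
      (1 + attachRate β t) * stateE β m a b c t (ab * bc * wa) +
        attachRate β t * stateE β m a b c t (ab * wa * wb) := by
  rw [stateE_succ hβ ht hab, mul_stateE, mul_stateE, stateE_add]
  congr 1 with s
  simp only [step, Pi.mul_apply, ha, hb, hc]
  ring

lemma stateE_ab_ac_bc_succ_in_c (hβ : 0 < β) (ht : 1 ≤ t) (hab : a ≠ b)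
    (hb : inBlock m b (t + 1) = 0) (hc : inBlock m c (t + 1) = 1) :
    stateE β m a b c (t + 1) (ab * ac * bc) =
      stateE β m a b c t (ab * ac * bc) +
        attachRate β t * (stateE β m a b c t (ab * ac * wb) +
          stateE β m a b c t (ab * bc * wa)) := by
  rw [stateE_succ hβ ht hab, stateE_add, mul_stateE, stateE_add]
  congr 1 with s
  simp only [step, Pi.mul_apply, hb, hc]
  ring

lemma stateE_ab_ac_bc_succ (hβ : 0 < β) (ht : 1 ≤ t) (hab : a ≠ b) (hb : inBlock m b (t + 1) = 0)
    (hc : inBlock m c (t + 1) = 0) :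
    stateE β m a b c (t + 1) (ab * ac * bc) = stateE β m a b c t (ab * ac * bc) := by
  rw [stateE_succ hβ ht hab]
  congr 1 with s
  simp only [step, Pi.mul_apply, hb, hc]
  ring

end Recursions

/-! ### Block times -/

/-- The number of tree vertices in the blocks before block `b`; for `b ≥ 1`, block `b` consists of
the vertices `blockStart m b + k + 1` with `k < m`. -/
def blockStart (m b : ℕ) : ℕ := (b - 1) * m

section Blocks

variable {β : ℝ} {m a b c t k : ℕ}

lemma blockStart_add (hb : 1 ≤ b) : blockStart m b + m = b * m := by
  rw [blockStart, ← Nat.succ_mul, Nat.succ_eq_add_one, Nat.sub_add_cancel hb]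

lemma mul_le_blockStart (hab : a < b) : a * m ≤ blockStart m b :=
  Nat.mul_le_mul_right m (Nat.le_sub_one_of_lt hab)

lemma one_le_blockStart_add (hm : 1 ≤ m) (hb : 2 ≤ b) (k : ℕ) : 1 ≤ blockStart m b + k :=
  (Nat.mul_pos (by omega) hm).trans_le (Nat.le_add_right _ k)

lemma blk_blockStart_add (hb : 1 ≤ b) (hk : k < m) : blk m (blockStart m b + k + 1) = b := by
  rw [blk, blockStart, Nat.add_sub_cancel, mul_comm, Nat.mul_add_div (by omega),
    Nat.div_eq_of_lt hk, add_zero, Nat.sub_add_cancel hb]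

lemma blk_mono {i j : ℕ} (h : i ≤ j) : blk m i ≤ blk m j :=
  Nat.succ_le_succ (Nat.div_le_div_right (Nat.sub_le_sub_right h 1))

lemma blk_ne_of_le_blockStart {i : ℕ} (hi : 1 ≤ i) (h : i ≤ blockStart m b) : blk m i ≠ b := by
  have hlt : (i - 1) / m < b - 1 := Nat.div_lt_of_lt_mul (by rw [blockStart, mul_comm] at h; omega)
  exact (Nat.add_lt_of_lt_sub hlt).ne

lemma inBlock_blockStart_add (hb : 1 ≤ b) (hk : k < m) :
    inBlock m b (blockStart m b + k + 1) = 1 :=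
  if_pos (blk_blockStart_add hb hk)

lemma inBlock_blockStart_add_of_ne (hb : 1 ≤ b) (hk : k < m) (hab : a ≠ b) :
    inBlock m a (blockStart m b + k + 1) = 0 :=
  if_neg (by rw [blk_blockStart_add hb hk]; exact hab.symm)

lemma inBlock_succ_of_mul_le (hm : 1 ≤ m) (h : a * m ≤ t) : inBlock m a (t + 1) = 0 := by
  have hlt : a ≤ t / m := (Nat.le_div_iff_mul_le hm).mpr h
  refine if_neg ?_
  rw [blk, Nat.add_sub_cancel]
  omega

lemma blockWeight_of_le_blockStart (f : ParentSeq t) (h : t ≤ blockStart m b) :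
    blockWeight β m f b = 0 := by
  refine sum_eq_zero fun i hi ↦ ?_
  obtain ⟨hi₁, hit⟩ := mem_Icc.mp hi
  rw [inBlock, if_neg (blk_ne_of_le_blockStart hi₁ (hit.trans h)), zero_mul]

lemma edgeCount_of_le_blockStart (f : ParentSeq t) (h : t ≤ blockStart m b) :
    edgeCount m f a b = 0 := by
  refine card_eq_zero.mpr (filter_eq_empty_iff.mpr fun j hj hab ↦ ?_)
  obtain ⟨hj₂, hjt⟩ := mem_Icc.mp hj
  exact blk_ne_of_le_blockStart (by omega) (hjt.trans h) hab.1

lemma stateE_eq_zero {φ : TriangleState → ℝ}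
    (h : ∀ f : ParentSeq t, φ (triangleState β m a b c f) = 0) : stateE β m a b c t φ = 0 := by
  simp [stateE_eq_moriE, moriE, h]

end Blocks

/-! ### Exact moments -/

/-- The growth of the second factorial moment of the weight of a completed block. -/
noncomputable def blockGrowth (β : ℝ) (t : ℕ) : ℝ := gammaRatio (2 / (2 + β)) t

/-- The value of `E[wa * (wa + 1)]` at the completion of block `a`, relative to `blockGrowth`. -/
noncomputable def rootFactor (β : ℝ) (m a : ℕ) : ℝ :=
  moriE (a * m) β (fun f ↦ blockWeight β m f a * (blockWeight β m f a + 1)) /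
    blockGrowth β (a * m)

/-- The ratio of `E[ab * wa]` to `rootFactor β m a` when `k` vertices have been added to a block
starting at time `T`. In the block `c`, the moments `E[ab * ac * wb]` and `E[ab * bc * wa]` obey the
same recursion. -/
noncomputable def edgeCoeff (β : ℝ) (T : ℕ) : ℕ → ℝ
  | 0 => 0
  | k + 1 => (1 + attachRate β (T + k)) * edgeCoeff β T k +
      attachRate β (T + k) * blockGrowth β (T + k)

/-- The ratio of `E[wa * (wa + 1) * wb]` to `rootFactor β m a` when `k` vertices have been added to
the block `b`, which starts at time `T`. -/
noncomputable def weightCoeff (β : ℝ) (T : ℕ) : ℕ → ℝ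
  | 0 => 0
  | k + 1 => (1 + 3 * attachRate β (T + k)) * weightCoeff β T k +
      (1 + β) * (1 + 2 * attachRate β (T + k)) * blockGrowth β (T + k)

/-- The ratio of `E[ab * wa * wb]` to `rootFactor β m a` when `k` vertices have been added to the
block `b`, which starts at time `T`. -/
noncomputable def middleCoeff (β : ℝ) (T : ℕ) : ℕ → ℝ
  | 0 => 0
  | k + 1 => (1 + 2 * attachRate β (T + k)) * middleCoeff β T k +
      (1 + β) * (1 + attachRate β (T + k)) * edgeCoeff β T k +
      attachRate β (T + k) * weightCoeff β T k +
      (1 + β) * attachRate β (T + k) * blockGrowth β (T + k)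

/-- The factor by which completing block `b` turns the moment `E[wa * (wa + 1)]` into
`E[ab * wa * wb]`. -/
noncomputable def middleFactor (β : ℝ) (m b : ℕ) : ℝ :=
  middleCoeff β (blockStart m b) m / blockGrowth β (b * m)

/-- The ratio of the expected triangle count on the blocks `a`, `b`, `c` to
`rootFactor β m a * middleFactor β m b` when `k` vertices have been added to the block `c`, which
starts at time `T`. -/
noncomputable def apexCoeff (β : ℝ) (T : ℕ) : ℕ → ℝ
  | 0 => 0
  | k + 1 => apexCoeff β T k + attachRate β (T + k) * (2 * edgeCoeff β T k)

/-- The factor contributed by the last block `c` to the expected triangle count. -/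
noncomputable def apexFactor (β : ℝ) (m c : ℕ) : ℝ := apexCoeff β (blockStart m c) m

section ExactMoments

open TriangleState

variable {β : ℝ} {m a b c t k : ℕ}

lemma two_div_two_add_mem_Ioo (hβ : 0 < β) : 2 / (2 + β) ∈ Set.Ioo (0 : ℝ) 1 :=
  ⟨by positivity, (div_lt_one (by positivity)).mpr (by linarith)⟩

lemma blockGrowth_pos (hβ : 0 < β) (ht : 1 ≤ t) : 0 < blockGrowth β t := by
  have ht' : (1 : ℝ) ≤ t := by exact_mod_cast ht
  exact gammaRatio_pos (by linarith) ((two_div_two_add_mem_Ioo hβ).2.trans_le ht')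

lemma blockGrowth_succ (hβ : 0 < β) (ht : 1 ≤ t) :
    blockGrowth β (t + 1) = (1 + 2 * attachRate β t) * blockGrowth β t := by
  have ht' : (1 : ℝ) ≤ t := by exact_mod_cast ht
  have hden := attachRate_den_pos hβ ht
  have hp := (two_div_two_add_mem_Ioo hβ).2
  have hrate : (t : ℝ) / (t - 2 / (2 + β)) = 1 + 2 * attachRate β t := by
    have h2 : t - 2 / (2 + β) = ((2 + β) * t - 2) / (2 + β) := by field_simp
    rw [attachRate, h2, div_div_eq_mul_div, div_eq_iff hden.ne', one_add_mul, mul_assoc,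
      inv_mul_cancel₀ hden.ne']
    ring
  rw [blockGrowth, Nat.cast_add_one, gammaRatio_add_one (by linarith) (by linarith), hrate,
    blockGrowth]

lemma one_le_of_mul_le (hm : 1 ≤ m) (ha : 1 ≤ a) (h : a * m ≤ t) : 1 ≤ t :=
  (Nat.mul_pos ha hm).trans_le h

lemma stateE_rising (hβ : 0 < β) (hm : 1 ≤ m) (ha : 1 ≤ a) (hab : a ≠ b) (ht : a * m ≤ t) :
    stateE β m a b c t rising = rootFactor β m a * blockGrowth β t := by
  induction t, ht using Nat.le_induction with
  | base =>
    rw [rootFactor, div_mul_cancel₀ _ (blockGrowth_pos hβ (Nat.mul_pos ha hm)).ne', stateE_eq_moriE]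
    rfl
  | succ t ht ih =>
    have ht₁ := one_le_of_mul_le hm ha ht
    rw [stateE_rising_succ hβ ht₁ hab (inBlock_succ_of_mul_le hm ht), ih, blockGrowth_succ hβ ht₁]
    ring

lemma stateE_rising_add (hβ : 0 < β) (hm : 1 ≤ m) (ha : 1 ≤ a) (hab : a < b) :
    stateE β m a b c (blockStart m b + k) rising =
      rootFactor β m a * blockGrowth β (blockStart m b + k) :=
  stateE_rising hβ hm ha hab.ne ((mul_le_blockStart hab).trans (Nat.le_add_right _ _))

lemma stateE_ab_wa (hβ : 0 < β) (hm : 1 ≤ m) (ha : 1 ≤ a) (hab : a < b) (hk : k ≤ m) :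
    stateE β m a b c (blockStart m b + k) (ab * wa) =
      rootFactor β m a * edgeCoeff β (blockStart m b) k := by
  induction k with
  | zero =>
    rw [edgeCoeff, mul_zero, add_zero]
    exact stateE_eq_zero fun f ↦ by simp [triangleState, edgeCount_of_le_blockStart f le_rfl]
  | succ k ih =>
    have ht := one_le_blockStart_add hm (by omega : 2 ≤ b) k
    rw [← add_assoc, stateE_ab_wa_succ_in_b hβ ht hab.ne
      (inBlock_blockStart_add_of_ne (by omega) hk hab.ne) (inBlock_blockStart_add (by omega) hk),
      ih (by omega), stateE_rising_add hβ hm ha hab, edgeCoeff]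
    ring

lemma stateE_rising_wb (hβ : 0 < β) (hm : 1 ≤ m) (ha : 1 ≤ a) (hab : a < b) (hk : k ≤ m) :
    stateE β m a b c (blockStart m b + k) (rising * wb) =
      rootFactor β m a * weightCoeff β (blockStart m b) k := by
  induction k with
  | zero =>
    rw [weightCoeff, mul_zero, add_zero]
    exact stateE_eq_zero fun f ↦ by simp [triangleState, blockWeight_of_le_blockStart f le_rfl]
  | succ k ih =>
    have ht := one_le_blockStart_add hm (by omega : 2 ≤ b) k
    rw [← add_assoc, stateE_rising_wb_succ_in_b hβ ht hab.ne
      (inBlock_blockStart_add_of_ne (by omega) hk hab.ne) (inBlock_blockStart_add (by omega) hk),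
      ih (by omega), stateE_rising_add hβ hm ha hab, weightCoeff]
    ring

lemma stateE_ab_wa_wb_add (hβ : 0 < β) (hm : 1 ≤ m) (ha : 1 ≤ a) (hab : a < b) (hk : k ≤ m) :
    stateE β m a b c (blockStart m b + k) (ab * wa * wb) =
      rootFactor β m a * middleCoeff β (blockStart m b) k := by
  induction k with
  | zero =>
    rw [middleCoeff, mul_zero, add_zero]
    exact stateE_eq_zero fun f ↦ by simp [triangleState, edgeCount_of_le_blockStart f le_rfl]
  | succ k ih =>
    have ht := one_le_blockStart_add hm (by omega : 2 ≤ b) k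
    rw [← add_assoc, stateE_ab_wa_wb_succ_in_b hβ ht hab.ne
      (inBlock_blockStart_add_of_ne (by omega) hk hab.ne) (inBlock_blockStart_add (by omega) hk),
      ih (by omega), stateE_ab_wa hβ hm ha hab (by omega), stateE_rising_wb hβ hm ha hab (by omega),
      stateE_rising_add hβ hm ha hab, middleCoeff]
    ring

lemma stateE_ab_wa_wb (hβ : 0 < β) (hm : 1 ≤ m) (ha : 1 ≤ a) (hab : a < b) (ht : b * m ≤ t) :
    stateE β m a b c t (ab * wa * wb) =
      rootFactor β m a * middleFactor β m b * blockGrowth β t := by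
  induction t, ht using Nat.le_induction with
  | base =>
    have hgrowth := blockGrowth_pos hβ (Nat.mul_pos (ha.trans hab.le) hm)
    rw [middleFactor, mul_div_assoc', div_mul_cancel₀ _ hgrowth.ne',
      ← blockStart_add (ha.trans hab.le), stateE_ab_wa_wb_add hβ hm ha hab le_rfl]
  | succ t ht ih =>
    have ht₁ := one_le_of_mul_le hm (ha.trans hab.le) ht
    have hat : a * m ≤ t := (Nat.mul_le_mul_right m hab.le).trans ht
    rw [stateE_ab_wa_wb_succ hβ ht₁ hab.ne (inBlock_succ_of_mul_le hm hat)
      (inBlock_succ_of_mul_le hm ht), ih, blockGrowth_succ hβ ht₁]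
    ring

lemma stateE_ab_wa_wb_in_c (hβ : 0 < β) (hm : 1 ≤ m) (ha : 1 ≤ a) (hab : a < b) (hbc : b < c) :
    stateE β m a b c (blockStart m c + k) (ab * wa * wb) =
      rootFactor β m a * middleFactor β m b * blockGrowth β (blockStart m c + k) :=
  stateE_ab_wa_wb hβ hm ha hab ((mul_le_blockStart hbc).trans (Nat.le_add_right _ _))

lemma stateE_ab_ac_wb (hβ : 0 < β) (hm : 1 ≤ m) (ha : 1 ≤ a) (hab : a < b) (hbc : b < c)
    (hk : k ≤ m) :
    stateE β m a b c (blockStart m c + k) (ab * ac * wb) =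
      rootFactor β m a * middleFactor β m b * edgeCoeff β (blockStart m c) k := by
  induction k with
  | zero =>
    rw [edgeCoeff, mul_zero, add_zero]
    exact stateE_eq_zero fun f ↦ by simp [triangleState, edgeCount_of_le_blockStart f le_rfl]
  | succ k ih =>
    have ht := one_le_blockStart_add hm (by omega : 2 ≤ c) k
    rw [← add_assoc, stateE_ab_ac_wb_succ_in_c hβ ht hab.ne
      (inBlock_blockStart_add_of_ne (by omega) hk hbc.ne) (inBlock_blockStart_add (by omega) hk),
      ih (by omega), stateE_ab_wa_wb_in_c hβ hm ha hab hbc, edgeCoeff]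
    ring

lemma stateE_ab_bc_wa (hβ : 0 < β) (hm : 1 ≤ m) (ha : 1 ≤ a) (hab : a < b) (hbc : b < c)
    (hk : k ≤ m) :
    stateE β m a b c (blockStart m c + k) (ab * bc * wa) =
      rootFactor β m a * middleFactor β m b * edgeCoeff β (blockStart m c) k := by
  induction k with
  | zero =>
    rw [edgeCoeff, mul_zero, add_zero]
    exact stateE_eq_zero fun f ↦ by simp [triangleState, edgeCount_of_le_blockStart f le_rfl]
  | succ k ih =>
    have ht := one_le_blockStart_add hm (by omega : 2 ≤ c) k
    rw [← add_assoc, stateE_ab_bc_wa_succ_in_c hβ ht hab.ne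
      (inBlock_blockStart_add_of_ne (by omega) hk (hab.trans hbc).ne)
      (inBlock_blockStart_add_of_ne (by omega) hk hbc.ne) (inBlock_blockStart_add (by omega) hk),
      ih (by omega), stateE_ab_wa_wb_in_c hβ hm ha hab hbc, edgeCoeff]
    ring

lemma stateE_ab_ac_bc_add (hβ : 0 < β) (hm : 1 ≤ m) (ha : 1 ≤ a) (hab : a < b) (hbc : b < c)
    (hk : k ≤ m) :
    stateE β m a b c (blockStart m c + k) (ab * ac * bc) =
      rootFactor β m a * middleFactor β m b * apexCoeff β (blockStart m c) k := by
  induction k with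
  | zero =>
    rw [apexCoeff, mul_zero, add_zero]
    exact stateE_eq_zero fun f ↦ by simp [triangleState, edgeCount_of_le_blockStart f le_rfl]
  | succ k ih =>
    have ht := one_le_blockStart_add hm (by omega : 2 ≤ c) k
    rw [← add_assoc, stateE_ab_ac_bc_succ_in_c hβ ht hab.ne
      (inBlock_blockStart_add_of_ne (by omega) hk hbc.ne) (inBlock_blockStart_add (by omega) hk),
      ih (by omega), stateE_ab_ac_wb hβ hm ha hab hbc (by omega),
      stateE_ab_bc_wa hβ hm ha hab hbc (by omega), apexCoeff]
    ring

lemma stateE_ab_ac_bc (hβ : 0 < β) (hm : 1 ≤ m) (ha : 1 ≤ a) (hab : a < b) (hbc : b < c)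
    (ht : c * m ≤ t) :
    stateE β m a b c t (ab * ac * bc) =
      rootFactor β m a * middleFactor β m b * apexFactor β m c := by
  have hc : 1 ≤ c := by omega
  induction t, ht using Nat.le_induction with
  | base =>
    rw [← blockStart_add hc, stateE_ab_ac_bc_add hβ hm ha hab hbc le_rfl, apexFactor]
  | succ t ht ih =>
    have hbt : b * m ≤ t := (Nat.mul_le_mul_right m hbc.le).trans ht
    rw [stateE_ab_ac_bc_succ hβ (one_le_of_mul_le hm hc ht) hab.ne
      (inBlock_succ_of_mul_le hm hbt) (inBlock_succ_of_mul_le hm ht), ih]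

end ExactMoments

/-! ### Asymptotics of the three factors -/

section FactorAsymptotics

variable {β : ℝ} {m : ℕ}

lemma blockStart_add_hasPowerAsymp (m k : ℕ) :
    HasPowerAsymp (fun b ↦ ((blockStart m b + k : ℕ) : ℝ)) m 1 1 := by
  have hlin := ((HasPowerAsymp.rpow_self 1 1).const_mul (m : ℝ)).add
    ((HasPowerAsymp.const ((k : ℝ) - m) 1).lift zero_le_one (by norm_num : (0 : ℝ) + 1 ≤ 1))
  refine hlin.congr' ?_ (by ring) rfl
  filter_upwards [eventually_ge_atTop 1] with b hb
  simp only [blockStart, Real.rpow_one]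
  push_cast [Nat.cast_sub hb]
  ring

lemma attachRate_hasPowerAsymp (hβ : 0 < β) : HasPowerAsymp (attachRate β) (2 + β)⁻¹ (-1) 1 := by
  have hlin := ((HasPowerAsymp.rpow_self 1 1).const_mul (2 + β)).add
    ((HasPowerAsymp.const (-2) 1).lift zero_le_one (by norm_num : (0 : ℝ) + 1 ≤ 1))
  refine (hlin.inv one_pos (by linarith)).congr (fun t ↦ ?_) (by ring) rfl
  rw [attachRate, Real.rpow_one, ← sub_eq_add_neg]

lemma attachRate_blockStart_add_hasPowerAsymp (hβ : 0 < β) (hm : 1 ≤ m) (k : ℕ) :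
    HasPowerAsymp (fun b ↦ attachRate β (blockStart m b + k)) ((2 + β) * m)⁻¹ (-1) 1 :=
  ((attachRate_hasPowerAsymp hβ).comp (blockStart_add_hasPowerAsymp m k) one_pos
    (by exact_mod_cast hm)).congr (fun _ ↦ rfl) (by rw [Real.rpow_neg_one, mul_inv]) rfl

lemma one_add_mul_attachRate_hasPowerAsymp (hβ : 0 < β) (hm : 1 ≤ m) (r : ℝ) (k : ℕ) :
    HasPowerAsymp (fun b ↦ 1 + r * attachRate β (blockStart m b + k)) 1 0 1 :=
  ((attachRate_blockStart_add_hasPowerAsymp hβ hm k).const_mul r).one_add zero_le_one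

lemma blockGrowth_blockStart_add_hasPowerAsymp (hβ : 0 < β) (hm : 1 ≤ m) (k : ℕ) :
    HasPowerAsymp (fun b ↦ blockGrowth β (blockStart m b + k)) ((m : ℝ) ^ (2 / (2 + β)))
      (2 / (2 + β)) 1 :=
  ((gammaRatio_hasPowerAsymp (two_div_two_add_mem_Ioo hβ).1 (two_div_two_add_mem_Ioo hβ).2).comp
    (blockStart_add_hasPowerAsymp m k) one_pos (by exact_mod_cast hm)).congr
    (fun _ ↦ rfl) (one_mul _) rfl

lemma inv_blockGrowth_hasPowerAsymp (hβ : 0 < β) (hm : 1 ≤ m) :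
    HasPowerAsymp (fun b ↦ (blockGrowth β (b * m))⁻¹) ((m : ℝ) ^ (2 / (2 + β)))⁻¹
      (-(2 / (2 + β))) 1 := by
  refine ((blockGrowth_blockStart_add_hasPowerAsymp hβ hm m).inv one_pos
    (Real.rpow_pos_of_pos (by exact_mod_cast hm) _)).congr' ?_ rfl rfl
  filter_upwards [eventually_ge_atTop 1] with b hb
  rw [blockStart_add hb]

lemma edgeCoeff_hasPowerAsymp (hβ : 0 < β) (hm : 1 ≤ m) (k : ℕ) :
    HasPowerAsymp (fun b ↦ edgeCoeff β (blockStart m b) k)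
      (k * (((2 + β) * m)⁻¹ * (m : ℝ) ^ (2 / (2 + β)))) (2 / (2 + β) - 1) 1 := by
  induction k with
  | zero => simpa [edgeCoeff] using HasPowerAsymp.zero _ _
  | succ k ih =>
    have hrate := attachRate_blockStart_add_hasPowerAsymp hβ hm k
    have hold := (one_add_mul_attachRate_hasPowerAsymp hβ hm 1 k).mul ih zero_le_one
    have hnew := hrate.mul (blockGrowth_blockStart_add_hasPowerAsymp hβ hm k) zero_le_one
    rw [zero_add] at hold
    rw [neg_add_eq_sub] at hnew
    refine (hold.add hnew).congr (fun b ↦ ?_) ?_ rfl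
    · rw [edgeCoeff, one_mul]
    · push_cast
      ring

lemma weightCoeff_hasPowerAsymp (hβ : 0 < β) (hm : 1 ≤ m) (k : ℕ) :
    HasPowerAsymp (fun b ↦ weightCoeff β (blockStart m b) k)
      (k * ((1 + β) * (m : ℝ) ^ (2 / (2 + β)))) (2 / (2 + β)) 1 := by
  induction k with
  | zero => simpa [weightCoeff] using HasPowerAsymp.zero _ _
  | succ k ih =>
    have hgrowth := blockGrowth_blockStart_add_hasPowerAsymp hβ hm k
    have hold := (one_add_mul_attachRate_hasPowerAsymp hβ hm 3 k).mul ih zero_le_one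
    have hnew := ((one_add_mul_attachRate_hasPowerAsymp hβ hm 2 k).const_mul (1 + β)).mul hgrowth
      zero_le_one
    rw [zero_add] at hold hnew
    refine (hold.add hnew).congr (fun b ↦ ?_) ?_ rfl
    · rw [weightCoeff]
    · push_cast
      ring

lemma middleCoeff_hasPowerAsymp (hβ : 0 < β) (hm : 1 ≤ m) (k : ℕ) :
    HasPowerAsymp (fun b ↦ middleCoeff β (blockStart m b) k)
      ((k : ℝ) ^ 2 * ((1 + β) * (((2 + β) * m)⁻¹ * (m : ℝ) ^ (2 / (2 + β)))))
      (2 / (2 + β) - 1) 1 := by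
  induction k with
  | zero => simpa [middleCoeff] using HasPowerAsymp.zero _ _
  | succ k ih =>
    have hrate := attachRate_blockStart_add_hasPowerAsymp hβ hm k
    have hold := (one_add_mul_attachRate_hasPowerAsymp hβ hm 2 k).mul ih zero_le_one
    have hedge := ((one_add_mul_attachRate_hasPowerAsymp hβ hm 1 k).const_mul (1 + β)).mul
      (edgeCoeff_hasPowerAsymp hβ hm k) zero_le_one
    have hweight := hrate.mul (weightCoeff_hasPowerAsymp hβ hm k) zero_le_one
    have hnew := (hrate.const_mul (1 + β)).mul
      (blockGrowth_blockStart_add_hasPowerAsymp hβ hm k) zero_le_one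
    rw [zero_add] at hold hedge
    rw [neg_add_eq_sub] at hweight hnew
    refine (((hold.add hedge).add hweight).add hnew).congr (fun b ↦ ?_) ?_ rfl
    · rw [middleCoeff, one_mul]
    · push_cast
      ring

lemma middleFactor_hasPowerAsymp (hβ : 0 < β) (hm : 1 ≤ m) :
    HasPowerAsymp (middleFactor β m) ((1 + β) * m / (2 + β)) (-1) 1 := by
  have hm' : (m : ℝ) ≠ 0 := Nat.cast_ne_zero.mpr (Nat.one_le_iff_ne_zero.mp hm)
  refine ((middleCoeff_hasPowerAsymp hβ hm m).mul (inv_blockGrowth_hasPowerAsymp hβ hm)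
    zero_le_one).congr (fun b ↦ (div_eq_mul_inv _ _).symm) ?_ (by ring)
  field_simp [hm']

lemma apexCoeff_hasPowerAsymp (hβ : 0 < β) (hm : 1 ≤ m) (k : ℕ) :
    HasPowerAsymp (fun c ↦ apexCoeff β (blockStart m c) k)
      (k * (k - 1) * (((2 + β) * m)⁻¹ ^ 2 * (m : ℝ) ^ (2 / (2 + β)))) (2 / (2 + β) - 2) 1 := by
  induction k with
  | zero => simpa [apexCoeff] using HasPowerAsymp.zero _ _
  | succ k ih =>
    have hnew := (attachRate_blockStart_add_hasPowerAsymp hβ hm k).mul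
      ((edgeCoeff_hasPowerAsymp hβ hm k).const_mul 2) zero_le_one
    refine (ih.add (hnew.congr (fun _ ↦ rfl) rfl (by ring))).congr (fun c ↦ ?_) ?_ rfl
    · rw [apexCoeff]
    · push_cast
      ring

lemma apexFactor_hasPowerAsymp (hβ : 0 < β) (hm : 1 ≤ m) :
    HasPowerAsymp (apexFactor β m)
      (m * (m - 1) * (((2 + β) * m)⁻¹ ^ 2 * (m : ℝ) ^ (2 / (2 + β)))) (2 / (2 + β) - 2) 1 :=
  apexCoeff_hasPowerAsymp hβ hm m

lemma blockWeight_mean_hasPowerAsymp (hβ : 0 < β) (hm : 1 ≤ m) (k : ℕ) (hk : k ≤ m) :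
    HasPowerAsymp
      (fun a ↦ stateE β m a (a + 1) (a + 1) (blockStart m a + k) TriangleState.wa)
      (k * (1 + β)) 0 1 := by
  induction k with
  | zero =>
    refine (HasPowerAsymp.zero 0 1).congr (fun a ↦ ?_) (by simp) rfl
    exact (stateE_eq_zero fun f ↦ blockWeight_of_le_blockStart f le_rfl).symm
  | succ k ih =>
    have hold := (one_add_mul_attachRate_hasPowerAsymp hβ hm 1 k).mul (ih (by omega)) zero_le_one
    rw [zero_add] at hold
    refine (hold.add (HasPowerAsymp.const (1 + β) 1)).congr' ?_ (by push_cast; ring) rfl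
    filter_upwards [eventually_ge_atTop 2] with a ha
    rw [← add_assoc (blockStart m a), stateE_wa_succ_in_a hβ (one_le_blockStart_add hm ha k)
      (by omega) (inBlock_blockStart_add (by omega) hk), one_mul]

lemma rising_mean_hasPowerAsymp (hβ : 0 < β) (hm : 1 ≤ m) (k : ℕ) (hk : k ≤ m) :
    HasPowerAsymp
      (fun a ↦ stateE β m a (a + 1) (a + 1) (blockStart m a + k) TriangleState.rising)
      (k * (1 + β) * (k * (1 + β) + 1)) 0 1 := by
  induction k with
  | zero =>
    refine (HasPowerAsymp.zero 0 1).congr (fun a ↦ ?_) (by simp) rfl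
    exact (stateE_eq_zero fun f ↦ by
      simp [TriangleState.rising, triangleState, blockWeight_of_le_blockStart f le_rfl]).symm
  | succ k ih =>
    have hold := (one_add_mul_attachRate_hasPowerAsymp hβ hm 2 k).mul (ih (by omega)) zero_le_one
    have hmean := ((one_add_mul_attachRate_hasPowerAsymp hβ hm 1 k).const_mul (2 * (1 + β))).mul
      (blockWeight_mean_hasPowerAsymp hβ hm k (by omega)) zero_le_one
    rw [zero_add] at hold hmean
    refine ((hold.add hmean).add (HasPowerAsymp.const ((1 + β) * (2 + β)) 1)).congr' ?_
      (by push_cast; ring) rfl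
    filter_upwards [eventually_ge_atTop 2] with a ha
    rw [← add_assoc, stateE_rising_succ_in_a hβ (one_le_blockStart_add hm ha k) (by omega)
      (inBlock_blockStart_add (by omega) hk), one_mul]

lemma rootFactor_hasPowerAsymp (hβ : 0 < β) (hm : 1 ≤ m) :
    HasPowerAsymp (rootFactor β m)
      (m * (1 + β) * (m * (1 + β) + 1) * ((m : ℝ) ^ (2 / (2 + β)))⁻¹) (-(2 / (2 + β))) 1 := by
  refine ((rising_mean_hasPowerAsymp hβ hm m le_rfl).mul (inv_blockGrowth_hasPowerAsymp hβ hm)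
    zero_le_one).congr' ?_ rfl (zero_add _)
  filter_upwards [eventually_ge_atTop 1] with a ha
  rw [blockStart_add ha, stateE_eq_moriE, rootFactor, div_eq_mul_inv]
  rfl

end FactorAsymptotics

/-! ### Summation over all triples of blocks -/

lemma HasPowerAsymp.exists_abs_triple_sum_sub_log_le {x y z : ℕ → ℝ} {κ κ' κ'' p : ℝ}
    (hx : HasPowerAsymp x κ (-p) 1) (hy : HasPowerAsymp y κ' (-1) 1)
    (hz : HasPowerAsymp z κ'' (p - 2) 1) (hp₀ : 0 ≤ p) (hp₁ : p < 1) :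
    ∃ K, 0 < K ∧ ∀ n : ℕ, 1 ≤ n →
      |∑ c ∈ Icc 1 n, z c * ∑ b ∈ Ico 1 c, y b * ∑ a ∈ Ico 1 b, x a
        - κ'' * (κ' * (κ / (1 - p)) / (1 - p)) * Real.log n| ≤ K := by
  set δ := (1 - p) / 2 with hδ
  have hsum {w : ℕ → ℝ} {ω : ℝ} (hw : HasPowerAsymp w ω (-p) δ) :
      HasPowerAsymp (fun n ↦ ∑ k ∈ Ico 1 n, w k) (ω / (1 - p)) (1 - p) δ :=
    (hw.congr (fun _ ↦ rfl) rfl (by ring)).sum_Ico (by linarith) (by linarith) (by linarith)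
  have hb := (hy.mono (by linarith)).mul (hsum (hx.mono (by linarith))) (by linarith)
  have hc := (hz.mono (by linarith)).mul (hsum (hb.congr (fun _ ↦ rfl) rfl (by ring)))
    (by linarith)
  exact (hc.congr (fun _ ↦ rfl) rfl (by ring)).exists_abs_sum_sub_log_le (by linarith)

lemma sum_increasing_triples {M : Type*} [AddCommMonoid M] (n : ℕ) (g : ℕ → ℕ → ℕ → M) :
    ∑ a ∈ Icc 1 n, ∑ b ∈ Ioc a n, ∑ c ∈ Ioc b n, g a b c =
      ∑ c ∈ Icc 1 n, ∑ b ∈ Ico 1 c, ∑ a ∈ Ico 1 b, g a b c := by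
  rw [sum_comm' (s' := fun b ↦ Ico 1 b) (t' := Icc 1 n) (by grind),
    sum_congr rfl fun b _ ↦ sum_comm,
    sum_comm' (s' := fun c ↦ Ico 1 c) (t' := Icc 1 n) (by grind)]

lemma mult_eq_edgeCount {n m a b : ℕ} (f : ParentSeq (n * m)) (hab : a < b) :
    mult n m f a b = edgeCount m f a b := by
  unfold mult edgeCount
  congr 1
  refine filter_congr fun j hj ↦ ⟨fun h ↦ h.resolve_left fun hba ↦ ?_, .inr⟩
  have hle : blk m (pval f j) ≤ blk m j := blk_mono (mem_Ico.mp (ParentSeq.pval_mem hj)).2.le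
  omega

lemma moriE_triangles {β : ℝ} (hβ : 0 < β) {m : ℕ} (hm : 1 ≤ m) (n : ℕ) :
    moriE (n * m) β (fun f ↦ ∑ a ∈ Icc 1 n, ∑ b ∈ Ioc a n, ∑ c ∈ Ioc b n,
      (mult n m f a b : ℝ) * (mult n m f a c : ℝ) * (mult n m f b c : ℝ)) =
    ∑ c ∈ Icc 1 n, apexFactor β m c *
      ∑ b ∈ Ico 1 c, middleFactor β m b * ∑ a ∈ Ico 1 b, rootFactor β m a := by
  simp only [sum_increasing_triples, moriE_sum, mul_sum]
  refine sum_congr rfl fun c hc ↦ sum_congr rfl fun b hb ↦ sum_congr rfl fun a ha ↦ ?_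
  obtain ⟨ha, hab⟩ := mem_Ico.mp ha
  have hbc := (mem_Ico.mp hb).2
  have hcn := Nat.mul_le_mul_right m (mem_Icc.mp hc).2
  simp only [mult_eq_edgeCount _ hab, mult_eq_edgeCount _ hbc, mult_eq_edgeCount _ (hab.trans hbc)]
  calc _ = rootFactor β m a * middleFactor β m b * apexFactor β m c :=
        (stateE_eq_moriE _).symm.trans (stateE_ab_ac_bc hβ hm ha hab hbc hcn)
    _ = _ := by ring

lemma factor_constants_eq {β : ℝ} (hβ : 0 < β) {m : ℕ} (hm : 1 ≤ m) :
    m * (m - 1) * (((2 + β) * m)⁻¹ ^ 2 * (m : ℝ) ^ (2 / (2 + β))) *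
        ((1 + β) * m / (2 + β) *
          (m * (1 + β) * (m * (1 + β) + 1) * ((m : ℝ) ^ (2 / (2 + β)))⁻¹ / (1 - 2 / (2 + β))) /
            (1 - 2 / (2 + β))) =
      m * (m - 1) * (1 + β) ^ 2 / β ^ 2 +
        m * ((m : ℝ) - 1) ^ 2 * (1 + β) ^ 3 / (β ^ 2 * (2 + β)) := by
  have hm' : (m : ℝ) ≠ 0 := Nat.cast_ne_zero.mpr (Nat.one_le_iff_ne_zero.mp hm)
  have hq : 1 - 2 / (2 + β) = β / (2 + β) := by
    field_simp
    ring
  rw [hq]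
  field_simp [hm']
  ring

/-- **Proposition 4.1.** The expected total number of triangles of `G^n_{m,β}` is
`(m(m−1)(1+β)²/β² + m(m−1)²(1+β)³/(β²(2+β))) log n + O(1)`. -/
theorem expected_number_of_triangles (β : ℝ) (hβ : 0 < β) (m : ℕ) (hm : 1 ≤ m) :
    ∃ K : ℝ, 0 < K ∧ ∀ n : ℕ, 2 ≤ n →
      |moriE (n * m) β
          (fun f => ∑ a ∈ Finset.Icc 1 n, ∑ b ∈ Finset.Ioc a n, ∑ c ∈ Finset.Ioc b n,
            (mult n m f a b : ℝ) * (mult n m f a c : ℝ) * (mult n m f b c : ℝ))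
        - ((m : ℝ) * ((m : ℝ) - 1) * (1 + β) ^ 2 / β ^ 2
            + (m : ℝ) * ((m : ℝ) - 1) ^ 2 * (1 + β) ^ 3 / (β ^ 2 * (2 + β)))
          * Real.log n| ≤ K := by
  have hp := two_div_two_add_mem_Ioo hβ
  obtain ⟨K, hK, hsum⟩ := HasPowerAsymp.exists_abs_triple_sum_sub_log_le
    (rootFactor_hasPowerAsymp hβ hm) (middleFactor_hasPowerAsymp hβ hm)
    (apexFactor_hasPowerAsymp hβ hm) hp.1.le hp.2
  refine ⟨K, hK, fun n hn ↦ ?_⟩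
  rw [moriE_triangles hβ hm, ← factor_constants_eq hβ hm]
  exact hsum n (by omega)
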